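/- Let A ∈ M_n(ℤ) be non-singular with h_A irreducible over ℚ and P'(A) ≠ ∅, and assume there exists a prime p with gcd(n, t_p) = 1. Let K be a number field and λ ∈ K a root of h_A with K = ℚ(λ). Then the ℚ-subalgebra of M_n(ℚ) generated by {T ∈ M_n(ℚ) : T(G_A) ⊆ G_A} is isomorphic as a ℚ-algebra to K (equivalently, End(G_A) ⊗_ℤ ℚ ≅ ℚ(λ)). -/

import Mathlib

open Matrix Polynomial

noncomputable section

/-- The matrix `A` viewed over `ℚ`. -/
def Aq {n : ℕ} (A : Matrix (Fin n) (Fin n) ℤ) : Matrix (Fin n) (Fin n) ℚ :=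
  A.map (Int.cast : ℤ → ℚ)

/-- The group `G_A = {A^k x : x ∈ ℤ^n, k ∈ ℤ} ⊆ ℚ^n`. -/
def GA {n : ℕ} (A : Matrix (Fin n) (Fin n) ℤ) : Set (Fin n → ℚ) :=
  {v | ∃ (k : ℤ) (x : Fin n → ℤ), v = (Aq A ^ k) *ᵥ fun i => ((x i : ℚ))}

/-- `P'(A)`: primes dividing `det A` such that `h_A ≢ x^n (mod p)`. -/
def Pbad {n : ℕ} (A : Matrix (Fin n) (Fin n) ℤ) : Set ℕ :=
  {p | p.Prime ∧ (p : ℤ) ∣ A.det ∧ A.charpoly.map (Int.castRingHom (ZMod p)) ≠ X ^ n}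

/-- `t_p`: multiplicity of `0` as a root of `h_A` mod `p`. -/
def tp {n : ℕ} (A : Matrix (Fin n) (Fin n) ℤ) (p : ℕ) : ℕ :=
  Polynomial.rootMultiplicity 0 (A.charpoly.map (Int.castRingHom (ZMod p)))

/-!
Let `v` be a valuation above `p` on a splitting field of `h_A`. Reducing the factorisation of `h_A`
modulo the maximal ideal of `v` shows that exactly `t_p` of its `n` roots satisfy `v < 1`, while
`v = 1` at the others. The Galois group permutes the roots transitively, and `t_p` is coprime to
`n`, so for any two roots `μ ≠ ν` some Galois conjugate of `v` has value `1` at `μ` and value `< 1`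
at `ν`. For this valuation, a left eigenvector `w` of `A` for `μ` is a bounded functional on `G_A`,
hence so is `x ↦ w ⬝ᵥ T *ᵥ x` when `T` preserves `G_A`; if `u` is a right eigenvector for `ν`, then
`u = ν ^ k • A ^ (-k) *ᵥ u` makes `w ⬝ᵥ T *ᵥ u` arbitrarily small, hence zero. So `T` is
block diagonal for the eigenspaces of `A`, that is, it commutes with `A`, and the centralizer of a
matrix with irreducible characteristic polynomial `h_A` is `ℚ[A] ≅ ℚ(λ)`.
-/

section Separation

variable {G X Y : Type*}

lemma dvd_ncard_preimage_of_forall_ncard_fiber_eq [Finite X] {f : X → Y} {c : ℕ}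
    (hf : ∀ x, (f ⁻¹' {f x}).ncard = c) (V : Set Y) : c ∣ (f ⁻¹' V).ncard := by
  classical
  have := Fintype.ofFinite X
  rw [Set.ncard_eq_toFinset_card', Finset.card_eq_sum_card_image f]
  refine Finset.dvd_sum fun y hy => dvd_of_eq ?_
  obtain ⟨x, hx, rfl⟩ := Finset.mem_image.1 hy
  rw [← hf x, Set.ncard_eq_toFinset_card']
  congr 1
  have hxV : x ∈ f ⁻¹' V := Set.mem_toFinset.1 hx
  ext z
  simp only [Set.mem_toFinset, Set.mem_preimage, Set.mem_singleton_iff, Finset.mem_filter]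
  exact ⟨fun hz => ⟨hz ▸ hxV, hz⟩, And.right⟩

variable [Group G] [MulAction G X]

/-- The group elements carrying the point `x` into `S`; two points are separated by translates of
`S` exactly when these sets differ. -/
def transporter (G : Type*) [Group G] [MulAction G X] (S : Set X) (x : X) : Set G :=
  {g | g • x ∈ S}

lemma transporter_smul_subset_iff {S : Set X} (g : G) {x y : X} :
    transporter G S (g • x) ⊆ transporter G S (g • y) ↔ transporter G S x ⊆ transporter G S y := by
  refine ⟨fun h k hk => ?_, fun h k hk => ?_⟩
  · simpa [transporter, smul_smul] using @h (k * g⁻¹) (by simpa [transporter, smul_smul] using hk)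
  · simpa [transporter, mul_smul] using @h (k * g) (by simpa [transporter, mul_smul] using hk)

lemma transporter_smul_eq_iff {S : Set X} (g : G) {x y : X} :
    transporter G S (g • x) = transporter G S (g • y) ↔ transporter G S x = transporter G S y := by
  simp only [Set.Subset.antisymm_iff, transporter_smul_subset_iff]

variable [MulAction.IsPretransitive G X]

lemma ncard_fiber_transporter_eq (S : Set X) (x y : X) :
    (transporter G S ⁻¹' {transporter G S x}).ncard =
      (transporter G S ⁻¹' {transporter G S y}).ncard := by
  obtain ⟨g, rfl⟩ := MulAction.exists_smul_eq G x y
  refine Set.ncard_congr (fun z _ => g • z) (fun z hz => ?_)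
    (fun _ _ _ _ h => MulAction.injective g h) fun z hz => ?_
  · exact (transporter_smul_eq_iff g).2 hz
  · refine ⟨g⁻¹ • z, ?_, smul_inv_smul g z⟩
    rw [← smul_inv_smul g z] at hz
    exact (transporter_smul_eq_iff g).1 hz

variable [Finite X]

/- With `y = g • x`, an inclusion at `x` propagates along the finite cycle
`x, g • x, g ^ 2 • x, …`, which returns to `x`. -/
lemma transporter_eq_of_subset {S : Set X} {x y : X}
    (h : transporter G S x ⊆ transporter G S y) : transporter G S x = transporter G S y := by
  obtain ⟨g, rfl⟩ := MulAction.exists_smul_eq G x y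
  have hmono : Monotone fun k : ℕ => transporter G S (g ^ k • x) :=
    monotone_nat_of_le_succ fun k => by
      simpa only [pow_succ, mul_smul] using (transporter_smul_subset_iff (g ^ k)).2 h
  obtain ⟨k, hk, hkx⟩ := (MulAction.injective g).mem_periodicPts x
  refine h.antisymm ?_
  simpa [← smul_iterate_apply, hkx.eq] using hmono (Nat.one_le_of_lt hk)

lemma transporter_injective_of_coprime {S : Set X} (hS : (Nat.card X).Coprime S.ncard) :
    Function.Injective (transporter G S) := by
  intro x y hxy
  have hdvd := dvd_ncard_preimage_of_forall_ncard_fiber_eq fun z =>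
    ncard_fiber_transporter_eq (G := G) S z x
  have hdvdX : (transporter G S ⁻¹' {transporter G S x}).ncard ∣ Nat.card X := by
    simpa using hdvd Set.univ
  have hdvdS : (transporter G S ⁻¹' {transporter G S x}).ncard ∣ S.ncard := by
    simpa [transporter] using hdvd {U | 1 ∈ U}
  have hone := Nat.eq_one_of_dvd_coprimes hS hdvdX hdvdS
  exact (Set.ncard_le_one (Set.toFinite _)).1 hone.le x rfl y hxy.symm

theorem exists_smul_mem_smul_notMem_of_coprime {S : Set X} (hS : (Nat.card X).Coprime S.ncard)
    {x y : X} (hxy : x ≠ y) : ∃ g : G, g • x ∈ S ∧ g • y ∉ S := by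
  by_contra! h
  exact hxy (transporter_injective_of_coprime hS (transporter_eq_of_subset fun g => h g))

end Separation

section IrreducibleCharpoly

variable {F R : Type*} [Field F] [Ring R] [Algebra F R]

lemma isUnit_aeval_of_not_dvd {p q : F[X]} {a : R} (hp : Irreducible p) (ha : aeval a p = 0)
    (hq : ¬p ∣ q) : IsUnit (aeval a q) := by
  obtain ⟨r, s, hrs⟩ := hp.coprime_iff_not_dvd.2 hq
  have hinv : aeval a s * aeval a q = 1 := by
    simpa [ha] using congrArg (aeval a) hrs
  exact isUnit_iff_exists.2 ⟨aeval a s, by rw [← map_mul, mul_comm, map_mul, hinv], hinv⟩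

lemma nonempty_adjoin_algEquiv_of_minpoly_eq {R' : Type*} [Ring R'] [Algebra F R'] {a : R} {b : R'}
    (h : minpoly F a = minpoly F b) :
    Nonempty (Algebra.adjoin F {a} ≃ₐ[F] Algebra.adjoin F {b}) := by
  have hker : RingHom.ker (aeval (R := F) a).rangeRestrict =
      RingHom.ker (aeval (R := F) b).rangeRestrict := by
    rw [AlgHom.ker_rangeRestrict, AlgHom.ker_rangeRestrict, minpoly.ker_aeval_eq_span_minpoly,
      minpoly.ker_aeval_eq_span_minpoly, h]
  rw [Algebra.adjoin_singleton_eq_range_aeval, Algebra.adjoin_singleton_eq_range_aeval]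
  exact ⟨(Ideal.quotientKerAlgEquivOfSurjective (aeval a).rangeRestrict_surjective).symm.trans
    ((Ideal.quotientEquivAlgOfEq F hker).trans
      (Ideal.quotientKerAlgEquivOfSurjective (aeval b).rangeRestrict_surjective))⟩

variable {n : Type*} [Fintype n] [DecidableEq n] {M : Matrix n n F}

lemma nonempty_of_irreducible_charpoly (hM : Irreducible M.charpoly) : Nonempty n := by
  rw [← Fintype.card_pos_iff, ← M.charpoly_natDegree_eq_dim]
  exact hM.natDegree_pos

lemma exists_aeval_mulVec_eq_of_irreducible_charpoly (hM : Irreducible M.charpoly) {e : n → F}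
    (he : e ≠ 0) (x : n → F) : ∃ q : F[X], aeval M q *ᵥ e = x := by
  let ev : F[X] →ₗ[F] n → F := (mulVecBilin F F).flip e ∘ₗ (aeval M).toLinearMap
  let evLT := ev.domRestrict (degreeLT F (Fintype.card n))
  have hinj : Function.Injective evLT := by
    rw [← LinearMap.ker_eq_bot, LinearMap.ker_eq_bot']
    rintro ⟨q, hq⟩ (hqe : aeval M q *ᵥ e = 0)
    rw [Submodule.mk_eq_zero]
    refine eq_zero_of_dvd_of_degree_lt (p := M.charpoly) ?_ ?_
    · by_contra hdvd
      have hunit := isUnit_aeval_of_not_dvd hM M.aeval_self_charpoly hdvd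
      exact he (mulVec_injective_of_isUnit hunit (hqe.trans (mulVec_zero _).symm))
    · rw [charpoly_degree_eq_dim]
      exact mem_degreeLT.1 hq
  have : FiniteDimensional F (degreeLT F (Fintype.card n)) :=
    (degreeLTEquiv F _).symm.finiteDimensional
  have hsurj : Function.Surjective evLT :=
    (LinearMap.injective_iff_surjective_of_finrank_eq_finrank
      (by simp [(degreeLTEquiv F _).finrank_eq])).1 hinj
  obtain ⟨q, hq⟩ := hsurj x
  exact ⟨q, hq⟩

theorem centralizer_singleton_eq_adjoin_of_irreducible_charpoly (hM : Irreducible M.charpoly) :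
    Subalgebra.centralizer F {M} = Algebra.adjoin F {M} := by
  refine le_antisymm (fun T hT => ?_) (Algebra.adjoin_singleton_le ?_)
  · obtain ⟨i⟩ := nonempty_of_irreducible_charpoly hM
    have hcyc := exists_aeval_mulVec_eq_of_irreducible_charpoly hM (e := Pi.single i 1) (by simp)
    have hTM : Commute T M := ((Subalgebra.mem_centralizer_iff F).1 hT M rfl).symm
    obtain ⟨q, hq⟩ := hcyc (T *ᵥ Pi.single i 1)
    suffices aeval M q = T from this ▸ aeval_mem_adjoin_singleton F M
    refine ext_of_mulVec_single fun j => ?_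
    obtain ⟨r, hr⟩ := hcyc (Pi.single j 1)
    have hTr : Commute T (aeval M r) := Algebra.commute_of_mem_adjoin_singleton_of_commute
      (aeval_mem_adjoin_singleton F M) hTM
    rw [← hr, mulVec_mulVec, mulVec_mulVec, hTr.eq, ← mulVec_mulVec _ _ T, ← hq, mulVec_mulVec,
      ← map_mul, ← map_mul, mul_comm]
  · simp [Subalgebra.mem_centralizer_iff]

end IrreducibleCharpoly

section SpectralProjections

variable {F : Type*} [Field F]

lemma nodal_roots_toFinset [DecidableEq F] {f : F[X]} (hf : f.Monic) (hsep : f.Separable)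
    (hsplit : f.Splits) : Lagrange.nodal f.roots.toFinset id = f := by
  rw [Lagrange.nodal_eq, Finset.prod, Multiset.toFinset_val, (nodup_roots hsep).dedup]
  exact (hsplit.eq_prod_roots_of_monic hf).symm

variable {R : Type*} [Ring R] [Algebra F R]

lemma aeval_X_sub_C_mul_basis_eq_zero [DecidableEq F] {s : Finset F} {m : R}
    (hm : aeval m (Lagrange.nodal s id) = 0) {x : F} (hx : x ∈ s) :
    aeval m ((X - C x) * Lagrange.basis s id x) = 0 := by
  have hnodal : (X - C x) * Lagrange.basis s id x =
      C (Lagrange.nodalWeight s id x) * Lagrange.nodal s id := by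
    rw [Lagrange.basis_eq_prod_sub_inv_mul_nodal_div hx, ← Lagrange.nodal_erase_eq_nodal_div hx,
      Lagrange.nodal_eq_mul_nodal_erase hx, mul_left_comm]
    rfl
  rw [hnodal, map_mul, hm, mul_zero]

/- The spectral projections `aeval m (Lagrange.basis s id x)` sum to `1`, and the hypothesis kills
all off-diagonal blocks of `T` with respect to them. -/
theorem commute_of_forall_mul_mul_eq_zero {s : Finset F} {m T : R}
    (hm : aeval m (Lagrange.nodal s id) = 0)
    (hT : ∀ μ ∈ s, ∀ ν ∈ s, μ ≠ ν → ∀ a b : R, a * m = μ • a → m * b = ν • b → a * T * b = 0) :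
    Commute T m := by
  classical
  rcases s.eq_empty_or_nonempty with rfl | hs
  · have : Subsingleton R := subsingleton_of_zero_eq_one (by simpa using hm.symm)
    exact Subsingleton.elim _ _
  let e : F → R := fun x => aeval m (Lagrange.basis s id x)
  have hsum : ∑ x ∈ s, e x = 1 := by
    simpa [e] using congrArg (aeval m) (Lagrange.sum_basis (Set.injOn_id _) hs)
  have hleft : ∀ x ∈ s, m * e x = x • e x := fun x hx => by
    simpa [e, sub_mul, sub_eq_zero, Algebra.smul_def] using aeval_X_sub_C_mul_basis_eq_zero hm hx
  have hright : ∀ x ∈ s, e x * m = x • e x := fun x hx => by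
    rw [← hleft x hx]
    exact (Algebra.commute_of_mem_adjoin_self (aeval_mem_adjoin_singleton F m)).symm
  have hblock : ∀ x ∈ s, ∀ y ∈ s, e x * (T * m - m * T) * e y = 0 := fun x hx y hy => by
    have hscalar : e x * (T * m - m * T) * e y = (y - x) • (e x * T * e y) := by
      rw [mul_sub, sub_mul, ← mul_assoc, ← mul_assoc, hright x hx, mul_assoc _ m, hleft y hy,
        sub_smul, smul_mul_assoc, smul_mul_assoc, mul_smul_comm]
    rcases eq_or_ne x y with rfl | hxy
    · rw [hscalar, sub_self, zero_smul]
    · rw [hscalar, hT x hx y hy hxy _ _ (hright x hx) (hleft y hy), smul_zero]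
  refine sub_eq_zero.1 ?_
  calc T * m - m * T = (∑ x ∈ s, e x) * (T * m - m * T) * ∑ y ∈ s, e y := by
        rw [hsum, one_mul, mul_one]
    _ = 0 := by
        rw [Finset.sum_mul, Finset.sum_mul_sum]
        exact Finset.sum_eq_zero fun x hx => Finset.sum_eq_zero fun y hy => hblock x hx y hy

end SpectralProjections

section Valuation

open Valuation

lemma valuation_dotProduct_le {R Γ₀ m : Type*} [Ring R] [LinearOrderedCommMonoidWithZero Γ₀]
    (v : Valuation R Γ₀) [Fintype m] {a b : m → R} {B C : Γ₀}
    (ha : ∀ i, v (a i) ≤ B) (hb : ∀ i, v (b i) ≤ C) : v (a ⬝ᵥ b) ≤ B * C :=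
  v.map_sum_le fun i _ => (v.map_mul _ _).trans_le (mul_le_mul' (ha i) (hb i))

lemma eq_zero_of_forall_le_pow_mul {Γ₀ : Type*} [LinearOrderedCommGroupWithZero Γ₀]
    [MulArchimedean Γ₀] {a b c : Γ₀} (ha : a < 1) (h : ∀ k : ℕ, c ≤ a ^ k * b) : c = 0 := by
  rcases eq_or_ne b 0 with rfl | hb
  · simpa using h 0
  by_contra hc
  obtain ⟨k, hk⟩ := exists_pow_lt₀ ha (Units.mk0 (c / b) (div_ne_zero hc hb))
  exact (h k).not_gt ((lt_div_iff₀ (zero_lt_iff.2 hb)).1 hk)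

variable {L Γ₀ : Type*} [Field L] [LinearOrderedCommGroupWithZero Γ₀] (v : Valuation L Γ₀)

lemma splits_of_splits_map_valuationSubring {f : v.valuationSubring[X]}
    (hf : f.Monic) (hsplit : (f.map (algebraMap v.valuationSubring L)).Splits) : f.Splits := by
  refine .of_splits_map_of_injective (FaithfulSMul.algebraMap_injective _ L) hsplit fun a ha => ?_
  have haint : IsIntegral v.valuationSubring a :=
    ⟨f, hf, by simpa [eval₂_eq_eval_map] using isRoot_of_mem_roots ha⟩
  exact ⟨⟨a, (valuationSubring.integers v).mem_of_integral haint⟩, rfl⟩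

lemma rootMultiplicity_zero_map_residue {f : v.valuationSubring[X]} (hf : f.Monic)
    (hsplit : (f.map (algebraMap v.valuationSubring L)).Splits) :
    rootMultiplicity 0 (f.map (IsLocalRing.residue v.valuationSubring)) =
      (f.map (algebraMap v.valuationSubring L)).roots.countP (v · < 1) := by
  classical
  have hfs : f.Splits := splits_of_splits_map_valuationSubring v hf hsplit
  rw [← count_roots, hfs.roots_map_of_ne_zero (hf.map _).ne_zero,
    hfs.roots_map_of_injective (FaithfulSMul.algebraMap_injective _ L), Multiset.count_map,
    Multiset.countP_map]
  congr! 2 with a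
  rw [eq_comm, IsLocalRing.residue_eq_zero_iff]
  exact v.mem_maximalIdeal_iff

lemma countP_roots_valuation_lt_one {f : ℤ[X]} (hf : f.Monic)
    (hsplit : (f.map (Int.castRingHom L)).Splits) {p : ℕ} (hp : p.Prime) (hv : v p < 1) :
    (f.map (Int.castRingHom L)).roots.countP (v · < 1) =
      rootMultiplicity 0 (f.map (Int.castRingHom (ZMod p))) := by
  let k := IsLocalRing.ResidueField v.valuationSubring
  have hpk : (p : k) = 0 := by
    rw [← map_natCast (IsLocalRing.residue v.valuationSubring), IsLocalRing.residue_eq_zero_iff,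
      v.mem_maximalIdeal_iff]
    simpa using hv
  have : CharP k p := (CharP.ringChar_of_prime_eq_zero hp hpk) ▸ ringChar.charP k
  have : Fact p.Prime := ⟨hp⟩
  have hfL : (f.map (Int.castRingHom v.valuationSubring)).map (algebraMap _ L) =
      f.map (Int.castRingHom L) := by
    rw [Polynomial.map_map]
    exact congrArg (f.map ·) (RingHom.ext_int _ _)
  have hfk : (f.map (Int.castRingHom v.valuationSubring)).map (IsLocalRing.residue _) =
      (f.map (Int.castRingHom (ZMod p))).map (ZMod.castHom dvd_rfl k) := by
    rw [Polynomial.map_map, Polynomial.map_map]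
    exact congrArg (f.map ·) (RingHom.ext_int _ _)
  rw [← hfL, ← rootMultiplicity_zero_map_residue v (hf.map _) (hfL ▸ hsplit), hfk,
    eq_rootMultiplicity_map (ZMod.castHom dvd_rfl k).injective, map_zero]

lemma ncard_rootSet_valuation_lt_one {f : ℤ[X]} (hf : f.Monic)
    (hsep : (f.map (Int.castRingHom L)).Separable) (hsplit : (f.map (Int.castRingHom L)).Splits)
    {p : ℕ} (hp : p.Prime) (hv : v p < 1) :
    {x : f.rootSet L | v x < 1}.ncard =
      rootMultiplicity 0 (f.map (Int.castRingHom (ZMod p))) := by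
  classical
  have hroots : (↑) '' {x : f.rootSet L | v x < 1} =
      (((f.map (Int.castRingHom L)).roots.filter (v · < 1)).toFinset : Set L) := by
    ext x
    simp [rootSet_def, aroots_def, and_comm]
  rw [← countP_roots_valuation_lt_one v hf hsplit hp hv, Multiset.countP_eq_card_filter,
    ← Multiset.toFinset_card_of_nodup ((nodup_roots hsep).filter _), ← Set.ncard_coe_finset,
    ← hroots, Set.ncard_image_of_injective _ Subtype.val_injective]

end Valuation

section RootSet

open Valuation WithZero IsDedekindDomain NumberField

lemma exists_valuation_natCast_lt_one (L : Type*) [Field L] [NumberField L] {p : ℕ}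
    (hp : p.Prime) : ∃ v : Valuation L ℤᵐ⁰, v p < 1 := by
  have hpZ : (Ideal.span {(p : ℤ)}).IsPrime :=
    (Ideal.span_singleton_prime (mod_cast hp.ne_zero)).2 (Nat.prime_iff_prime_int.1 hp)
  obtain ⟨P, hP, hPp⟩ := Ideal.nonempty_primesOver (S := 𝓞 L) (Ideal.span {(p : ℤ)})
  have hpP : (p : 𝓞 L) ∈ P := by
    simpa using (P.mem_of_liesOver (Ideal.span {(p : ℤ)}) p).1 (Ideal.mem_span_singleton_self _)
  let w : HeightOneSpectrum (𝓞 L) :=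
    ⟨P, hP, fun h => hp.ne_zero (by exact_mod_cast (Ideal.mem_bot.1 (h ▸ hpP)))⟩
  exact ⟨w.valuation L, by simpa using (w.valuation_lt_one_iff_mem (K := L) p).2 hpP⟩

lemma natCard_rootSet_eq_natDegree {R K : Type*} [CommRing R] [Field K] [Algebra R K] {f : R[X]}
    (hf : f.Monic) (hsep : (f.map (algebraMap R K)).Separable)
    (hsplit : (f.map (algebraMap R K)).Splits) : Nat.card (f.rootSet K) = f.natDegree := by
  classical
  rw [← hf.natDegree_map (algebraMap R K), hsplit.natDegree_eq_card_roots, rootSet_def,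
    Nat.card_coe_set_eq, Set.ncard_coe_finset]
  exact Multiset.toFinset_card_of_nodup (nodup_roots hsep)

variable {L : Type*} [Field L] [Algebra ℚ L]

lemma map_intCast_map_algebraMap (f : ℤ[X]) :
    (f.map (Int.castRingHom ℚ)).map (algebraMap ℚ L) = f.map (Int.castRingHom L) := by
  rw [Polynomial.map_map]
  exact congrArg (f.map ·) (RingHom.ext_int _ _)

lemma separable_map_of_irreducible {f : ℤ[X]} (hirr : Irreducible (f.map (Int.castRingHom ℚ))) :
    (f.map (Int.castRingHom L)).Separable :=
  map_intCast_map_algebraMap (L := L) f ▸ hirr.separable.map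

lemma minpoly_eq_of_mem_rootSet {f : ℤ[X]} (hf : f.Monic)
    (hirr : Irreducible (f.map (Int.castRingHom ℚ))) {x : L} (hx : x ∈ f.rootSet L) :
    minpoly ℚ x = f.map (Int.castRingHom ℚ) :=
  (minpoly.eq_of_irreducible_of_monic hirr
    ((aeval_map_algebraMap ℚ x f).trans (aeval_eq_zero_of_mem_rootSet hx)) (hf.map _)).symm

lemma isPretransitive_rootSet [Normal ℚ L] {f : ℤ[X]} (hf : f.Monic)
    (hirr : Irreducible (f.map (Int.castRingHom ℚ))) :
    MulAction.IsPretransitive Gal(L/ℚ) (f.rootSet L) := by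
  refine ⟨fun x y => ?_⟩
  obtain ⟨g, hg⟩ := (Normal.minpoly_eq_iff_mem_orbit L).1
    ((minpoly_eq_of_mem_rootSet hf hirr y.2).trans (minpoly_eq_of_mem_rootSet hf hirr x.2).symm)
  exact ⟨g, Subtype.ext hg⟩

/- The existential hides that over `ℚ` the field `g.SplittingField` has a second `ℚ`-algebra
structure, the one carried by every field of characteristic zero. -/
lemma exists_normal_splits.{u} {F : Type u} [Field F] (g : F[X]) :
    ∃ (L : Type u) (_ : Field L) (_ : Algebra F L),
      FiniteDimensional F L ∧ Normal F L ∧ (g.map (algebraMap F L)).Splits :=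
  ⟨g.SplittingField, inferInstance, inferInstance, inferInstance, .of_isSplittingField g,
    SplittingField.splits g⟩

theorem exists_valuation_lt_one_and_eq_one [FiniteDimensional ℚ L] [Normal ℚ L]
    {f : ℤ[X]} (hf : f.Monic) (hirr : Irreducible (f.map (Int.castRingHom ℚ))) {p : ℕ}
    (hp : p.Prime)
    (hcop : f.natDegree.Coprime (rootMultiplicity 0 (f.map (Int.castRingHom (ZMod p)))))
    {x y : f.rootSet L} (hxy : x ≠ y) :
    ∃ v : Valuation L ℤᵐ⁰, v x < 1 ∧ v y = 1 := by
  have hsep : (f.map (Int.castRingHom L)).Separable := separable_map_of_irreducible hirr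
  have hsplit : (f.map (Int.castRingHom L)).Splits := by
    rw [← map_intCast_map_algebraMap, ← minpoly_eq_of_mem_rootSet hf hirr x.2]
    exact Normal.splits' (x : L)
  have := isPretransitive_rootSet (L := L) hf hirr
  have : NumberField L := .of_module_finite ℚ L
  obtain ⟨v, hv⟩ := exists_valuation_natCast_lt_one L hp
  rw [← natCard_rootSet_eq_natDegree hf hsep hsplit,
    ← ncard_rootSet_valuation_lt_one v hf hsep hsplit hp hv] at hcop
  obtain ⟨g, hgx, hgy⟩ := exists_smul_mem_smul_notMem_of_coprime (G := Gal(L/ℚ)) hcop hxy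
  have hint : IsIntegral ℤ ((g • y : f.rootSet L) : L) :=
    ⟨f, hf, aeval_eq_zero_of_mem_rootSet (g • y).2⟩
  have hle : v ((g • y : f.rootSet L) : L) ≤ 1 :=
    (valuationSubring.integers v).mem_of_integral hint.tower_top
  exact ⟨v.comap (g : L →+* L), hgx, hle.antisymm (not_lt.1 hgy)⟩

end RootSet

section Eigenvectors

variable {R S m : Type*} [Fintype m]

lemma dotProduct_comp_mulVec {l : Type*} [Fintype l] [NonAssocSemiring R] [Semiring S]
    (f : R →+* S) (w : l → S) (M : Matrix l m R) (x : m → R) :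
    w ⬝ᵥ f ∘ (M *ᵥ x) = (w ᵥ* M.map f) ⬝ᵥ f ∘ x := by
  rw [← dotProduct_mulVec]
  exact congrArg (w ⬝ᵥ ·) (funext (f.map_mulVec M x))

lemma pow_mulVec_eq_smul [CommSemiring R] [DecidableEq m] {M : Matrix m m R} {u : m → R} {ν : R}
    (hu : M *ᵥ u = ν • u) (k : ℕ) : M ^ k *ᵥ u = ν ^ k • u := by
  induction k with
  | zero => simp
  | succ k ih => rw [pow_succ, ← mulVec_mulVec, hu, mulVec_smul, ih, smul_smul, pow_succ']

lemma vecMul_pow_eq_smul [CommSemiring R] [DecidableEq m] {M : Matrix m m R} {w : m → R} {μ : R}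
    (hw : w ᵥ* M = μ • w) (k : ℕ) : w ᵥ* M ^ k = μ ^ k • w := by
  rw [← mulVec_transpose, transpose_pow]
  exact pow_mulVec_eq_smul (by rw [mulVec_transpose, hw]) k

end Eigenvectors

section GA

variable {n : ℕ} {A : Matrix (Fin n) (Fin n) ℤ}

lemma isUnit_det_Aq (hA : A.det ≠ 0) : IsUnit (Aq A).det := by
  have hdet : (Aq A).det = (A.det : ℚ) := ((Int.castRingHom ℚ).map_det A).symm
  exact isUnit_iff_ne_zero.2 (hdet ▸ Int.cast_ne_zero.2 hA)

lemma charpoly_Aq (A : Matrix (Fin n) (Fin n) ℤ) :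
    (Aq A).charpoly = A.charpoly.map (Int.castRingHom ℚ) :=
  charpoly_map A (Int.castRingHom ℚ)

lemma mem_GA_iff (hA : A.det ≠ 0) {x : Fin n → ℚ} :
    x ∈ GA A ↔ ∃ (k : ℕ) (z : Fin n → ℤ), Aq A ^ k *ᵥ x = fun i => (z i : ℚ) := by
  constructor
  · rintro ⟨m, z, rfl⟩
    obtain ⟨k, rfl | rfl⟩ := m.eq_nat_or_neg
    · refine ⟨0, A ^ k *ᵥ z, funext fun i => ?_⟩
      change _ = Int.castRingHom ℚ _
      rw [RingHom.map_mulVec, Matrix.map_pow, pow_zero, one_mulVec, zpow_natCast]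
      rfl
    · refine ⟨k, z, ?_⟩
      rw [mulVec_mulVec, ← zpow_natCast, ← Matrix.zpow_add (isUnit_det_Aq hA), add_neg_cancel,
        zpow_zero, one_mulVec]
  · rintro ⟨k, z, hz⟩
    refine ⟨-k, z, ?_⟩
    rw [← hz, mulVec_mulVec, ← zpow_natCast,
      Matrix.zpow_neg_mul_zpow_self _ (isUnit_det_Aq hA), one_mulVec]

lemma mapsTo_Aq_mulVec_GA (hA : A.det ≠ 0) : Set.MapsTo (Aq A).mulVec (GA A) (GA A) := by
  rintro _ ⟨k, z, rfl⟩
  exact ⟨1 + k, z, by rw [mulVec_mulVec, Matrix.zpow_one_add (isUnit_det_Aq hA)]⟩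

lemma inv_pow_mulVec_single_mem_GA (hA : A.det ≠ 0) (k : ℕ) (j : Fin n) :
    (Aq A ^ k)⁻¹ *ᵥ Pi.single j 1 ∈ GA A := by
  refine ⟨-k, Pi.single j 1, ?_⟩
  rw [Matrix.zpow_neg (isUnit_det_Aq hA), zpow_natCast]
  congr 1
  ext i
  simp [Pi.single_apply]

variable {T : Matrix (Fin n) (Fin n) ℚ} {L Γ₀ : Type*} [Field L] [Algebra ℚ L]
  [LinearOrderedCommGroupWithZero Γ₀] {v : Valuation L Γ₀} {w : Fin n → L}

lemma valuation_dotProduct_le_of_mem_GA (hA : A.det ≠ 0) {μ : L}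
    (hw : w ᵥ* (Aq A).map (algebraMap ℚ L) = μ • w) (hμ : v μ = 1) {B : Γ₀}
    (hB : ∀ i, v (w i) ≤ B) {x : Fin n → ℚ} (hx : x ∈ GA A) :
    v (w ⬝ᵥ algebraMap ℚ L ∘ x) ≤ B := by
  obtain ⟨k, z, hz⟩ := (mem_GA_iff hA).1 hx
  have hz1 : ∀ i, v ((algebraMap ℚ L ∘ fun i => (z i : ℚ)) i) ≤ 1 := fun i =>
    (congrArg v (map_intCast (algebraMap ℚ L) (z i))).trans_le
      (intCast_mem v.valuationSubring (z i))
  calc v (w ⬝ᵥ algebraMap ℚ L ∘ x) = v ((μ ^ k • w) ⬝ᵥ algebraMap ℚ L ∘ x) := by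
        rw [smul_dotProduct, smul_eq_mul, map_mul, map_pow, hμ, one_pow, one_mul]
    _ = v (w ⬝ᵥ algebraMap ℚ L ∘ (Aq A ^ k *ᵥ x)) := by
        rw [dotProduct_comp_mulVec, Matrix.map_pow, vecMul_pow_eq_smul hw]
    _ ≤ B := by
        rw [hz, ← mul_one B]
        exact valuation_dotProduct_le v hB hz1

/- The columns of `A ^ (-k)` lie in `G_A` and `u = ν ^ k • A ^ (-k) *ᵥ u`, so `v (w ⬝ᵥ u)` is at
most a constant times `v ν ^ k`. -/
lemma dotProduct_eq_zero_of_valuation_le [MulArchimedean Γ₀] (hA : A.det ≠ 0) {u : Fin n → L}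
    {ν : L} (hu : (Aq A).map (algebraMap ℚ L) *ᵥ u = ν • u) (hν : v ν < 1) {B : Γ₀}
    (hB : ∀ x ∈ GA A, v (w ⬝ᵥ algebraMap ℚ L ∘ x) ≤ B) : w ⬝ᵥ u = 0 := by
  obtain ⟨C, hC⟩ := Finite.bddAbove_range fun j => v (u j)
  let N (k : ℕ) : Matrix (Fin n) (Fin n) ℚ := (Aq A ^ k)⁻¹
  have hN (k : ℕ) : (N k).map (algebraMap ℚ L) *ᵥ (ν ^ k • u) = u := by
    have hone : N k * Aq A ^ k = 1 := nonsing_inv_mul _ (by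
      simpa using (isUnit_det_Aq hA).pow k)
    rw [← pow_mulVec_eq_smul hu, ← Matrix.map_pow, mulVec_mulVec, ← Matrix.map_mul, hone]
    simp
  have hcol (k : ℕ) (j : Fin n) : v ((w ᵥ* (N k).map (algebraMap ℚ L)) j) ≤ B := by
    have := hB _ (inv_pow_mulVec_single_mem_GA hA k j)
    rw [mulVec_single_one] at this
    exact this
  rw [← v.zero_iff]
  refine eq_zero_of_forall_le_pow_mul hν (b := B * C) fun k => ?_
  calc v (w ⬝ᵥ u) = v (ν ^ k * ((w ᵥ* (N k).map (algebraMap ℚ L)) ⬝ᵥ u)) := by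
        rw [← smul_eq_mul, ← dotProduct_smul, ← dotProduct_mulVec, hN]
    _ ≤ v ν ^ k * (B * C) := by
        rw [map_mul, map_pow]
        gcongr
        exact valuation_dotProduct_le v (hcol k) fun j => hC ⟨j, rfl⟩

theorem vecMul_dotProduct_eq_zero_of_mapsTo_GA [MulArchimedean Γ₀] (hA : A.det ≠ 0)
    (hT : Set.MapsTo T.mulVec (GA A) (GA A)) {u : Fin n → L} {μ ν : L}
    (hw : w ᵥ* (Aq A).map (algebraMap ℚ L) = μ • w) (hμ : v μ = 1)
    (hu : (Aq A).map (algebraMap ℚ L) *ᵥ u = ν • u) (hν : v ν < 1) :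
    (w ᵥ* T.map (algebraMap ℚ L)) ⬝ᵥ u = 0 := by
  obtain ⟨B, hB⟩ := Finite.bddAbove_range fun i => v (w i)
  refine dotProduct_eq_zero_of_valuation_le hA hu hν (B := B) fun x hx => ?_
  rw [← dotProduct_comp_mulVec]
  exact valuation_dotProduct_le_of_mem_GA hA hw hμ (fun i => hB ⟨i, rfl⟩) (hT hx)

lemma mul_mul_eq_zero_of_mapsTo_GA [FiniteDimensional ℚ L] [Normal ℚ L] (hA : A.det ≠ 0)
    (hirr : Irreducible (A.charpoly.map (Int.castRingHom ℚ))) {p : ℕ}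
    (hp : p.Prime) (hcop : n.Coprime (tp A p)) (hT : Set.MapsTo T.mulVec (GA A) (GA A))
    {μ ν : A.charpoly.rootSet L} (hμν : μ ≠ ν) {a b : Matrix (Fin n) (Fin n) L}
    (ha : a * (Aq A).map (algebraMap ℚ L) = (μ : L) • a)
    (hb : (Aq A).map (algebraMap ℚ L) * b = (ν : L) • b) :
    a * T.map (algebraMap ℚ L) * b = 0 := by
  have hdeg : A.charpoly.natDegree = n := by rw [charpoly_natDegree_eq_dim, Fintype.card_fin]
  obtain ⟨v, hν, hμ⟩ := exists_valuation_lt_one_and_eq_one A.charpoly_monic hirr hp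
    (hdeg.symm ▸ hcop) hμν.symm
  ext i j
  exact vecMul_dotProduct_eq_zero_of_mapsTo_GA hA hT (congrFun ha i) hμ
    (funext fun k => congrFun (congrFun hb k) j) hν

theorem commute_Aq_of_mapsTo_GA (hA : A.det ≠ 0)
    (hirr : Irreducible (A.charpoly.map (Int.castRingHom ℚ))) {p : ℕ} (hp : p.Prime)
    (hcop : n.Coprime (tp A p)) (hT : Set.MapsTo T.mulVec (GA A) (GA A)) : Commute T (Aq A) := by
  classical
  obtain ⟨L, _, _, _, _, hsplit⟩ := exists_normal_splits (A.charpoly.map (Int.castRingHom ℚ))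
  rw [map_intCast_map_algebraMap] at hsplit
  have hchar : A.charpoly.map (Int.castRingHom L) = ((Aq A).map (algebraMap ℚ L)).charpoly := by
    rw [charpoly_map, charpoly_Aq, map_intCast_map_algebraMap]
  have hnodal : aeval ((Aq A).map (algebraMap ℚ L))
      (Lagrange.nodal (A.charpoly.aroots L).toFinset id) = 0 := by
    rw [aroots_def, algebraMap_int_eq, nodal_roots_toFinset (A.charpoly_monic.map _)
      (separable_map_of_irreducible hirr) hsplit, hchar, aeval_self_charpoly]
  have hcomm : Commute (T.map (algebraMap ℚ L)) ((Aq A).map (algebraMap ℚ L)) :=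
    commute_of_forall_mul_mul_eq_zero hnodal fun μ hμ ν hν hμν a b =>
      mul_mul_eq_zero_of_mapsTo_GA (μ := ⟨μ, hμ⟩) (ν := ⟨ν, hν⟩) hA hirr hp hcop hT
        (mt (congrArg Subtype.val) hμν)
  exact .of_map (f := (algebraMap ℚ L).mapMatrix) (map_injective (algebraMap ℚ L).injective) hcomm

end GA

/-- the `ℚ`-subalgebra of `M_n(ℚ)` generated by `End(G_A)` is isomorphic,
as a `ℚ`-algebra, to `K = ℚ(λ)`. -/
theorem stmt11 (n : ℕ) (A : Matrix (Fin n) (Fin n) ℤ) (hA : A.det ≠ 0)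
    (hirr : Irreducible (A.charpoly.map (Int.castRingHom ℚ)))
    (hP' : (Pbad A).Nonempty)
    (hcop : ∃ p : ℕ, p.Prime ∧ Nat.gcd n (tp A p) = 1)
    (K : Type) [Field K] [NumberField K] (lam : K)
    (hroot : Polynomial.aeval lam (A.charpoly.map (Int.castRingHom ℚ)) = 0)
    (hgenK : Algebra.adjoin ℚ ({lam} : Set K) = ⊤) :
    Nonempty
      ((Algebra.adjoin ℚ {T : Matrix (Fin n) (Fin n) ℚ | ∀ v ∈ GA A, T *ᵥ v ∈ GA A})
        ≃ₐ[ℚ] K) := by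
  obtain ⟨p, hp, hcop⟩ := hcop
  rw [← charpoly_Aq] at hirr hroot
  have hadjoin : Algebra.adjoin ℚ {T : Matrix (Fin n) (Fin n) ℚ | ∀ v ∈ GA A, T *ᵥ v ∈ GA A} =
      Algebra.adjoin ℚ {Aq A} := by
    refine le_antisymm (Algebra.adjoin_le fun T hT => ?_) (Algebra.adjoin_mono ?_)
    · rw [← centralizer_singleton_eq_adjoin_of_irreducible_charpoly hirr]
      rintro _ rfl
      exact (commute_Aq_of_mapsTo_GA hA (charpoly_Aq A ▸ hirr) hp hcop hT).symm
    · exact Set.singleton_subset_iff.2 (mapsTo_Aq_mulVec_GA hA)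
  have := nonempty_of_irreducible_charpoly hirr
  have hminpoly : minpoly ℚ (Aq A) = minpoly ℚ lam :=
    (minpoly.eq_of_irreducible_of_monic hirr (Aq A).aeval_self_charpoly
      (Aq A).charpoly_monic).symm.trans
        (minpoly.eq_of_irreducible_of_monic hirr hroot (Aq A).charpoly_monic)
  obtain ⟨e⟩ := nonempty_adjoin_algEquiv_of_minpoly_eq hminpoly
  rw [hadjoin]
  rw [hgenK] at e
  exact ⟨e.trans Subalgebra.topEquiv⟩
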